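/- Let n ≥ 3 be odd and let S be a set of n distinct collinear points in ℝ². Then every spanning tour of S has a rotation angle equal to π at some vertex. -/

import Mathlib

open EuclideanGeometry Real

/-!
Coordinatize the line. If no vertex of the closed tour lies strictly between its two neighbours,
then the tour reverses direction at every vertex, so its steps alternate between increasing and
decreasing, which is impossible around a cycle of odd length.
-/

theorem exists_apply_iff_of_isPeriodicPt_of_odd {α : Type*} {T : α → α} {n : ℕ} {x : α}
    (hx : Function.IsPeriodicPt T n x) (hodd : Odd n) (p : α → Prop) :
    ∃ y, p (T y) ↔ p y := by
  by_contra hnone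
  have hflip : ∀ y, ¬ p y ↔ p (T y) := fun y ↦ not_iff_comm.1 (not_iff.1 fun h ↦ hnone ⟨y, h⟩)
  have hsemi : Function.Semiconj p T Not := fun y ↦ (propext (hflip y)).symm
  have hfix : Not^[n] (p x) = p x := hx.map hsemi
  rw [Function.not_involutive.iterate_odd hodd] at hfix
  exact not_iff_self (iff_of_eq hfix)

theorem exists_lt_and_lt_or_gt_and_gt_of_odd {α : Type*} [LinearOrder α] {n : ℕ} (hodd : Odd n)
    {r : ZMod n → α} (hne : ∀ i, r i ≠ r (i + 1)) :
    ∃ i, (r (i - 1) < r i ∧ r i < r (i + 1)) ∨ (r (i + 1) < r i ∧ r i < r (i - 1)) := by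
  have hper : Function.IsPeriodicPt (· + 1) n (0 : ZMod n) := by
    simp [Function.IsPeriodicPt, Function.IsFixedPt]
  obtain ⟨j, hj⟩ := exists_apply_iff_of_isPeriodicPt_of_odd hper hodd fun i ↦ r i < r (i + 1)
  refine ⟨j + 1, ?_⟩
  rw [add_sub_cancel_right]
  rcases (hne j).lt_or_gt with hup | hdown
  · exact .inl ⟨hup, hj.2 hup⟩
  · exact .inr ⟨(hne (j + 1)).symm.lt_of_le (not_lt.1 (mt hj.1 hdown.not_gt)), hdown⟩

theorem sbtw_of_lt_of_lt {k : Type*} [Field k] [LinearOrder k] [IsStrictOrderedRing k]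
    {a b c : k} (hab : a < b) (hbc : b < c) : Sbtw k a b c := by
  refine ⟨?_, hab.ne', hbc.ne⟩
  rw [← mem_segment_iff_wbtw, segment_eq_Icc (hab.trans hbc).le]
  exact ⟨hab.le, hbc.le⟩

theorem exists_injective_affineMap_of_collinear {k V P : Type*} [DivisionRing k] [AddCommGroup V]
    [Module k V] [AddTorsor V P] {s : Set P} (hcol : Collinear k s) (hs : s.Nontrivial) :
    ∃ g : k →ᵃ[k] P, Function.Injective g ∧ s ⊆ Set.range g := by
  obtain ⟨a, ha, b, hb, hab⟩ := hs
  refine ⟨AffineMap.lineMap a b, AffineMap.lineMap_injective k hab, fun p hp ↦ ?_⟩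
  have hline : p ∈ line[k, a, b] := hcol.mem_affineSpan_of_mem_of_ne ha hb hp hab
  exact mem_affineSpan_pair_iff_exists_lineMap_eq.1 hline

theorem exists_sbtw_of_collinear_range_of_odd {k V P : Type*} [Field k] [LinearOrder k]
    [IsStrictOrderedRing k] [AddCommGroup V] [Module k V] [AddTorsor V P] {n : ℕ} (hodd : Odd n)
    {f : ZMod n → P} (hcol : Collinear k (Set.range f)) (hne : ∀ i, f i ≠ f (i + 1)) :
    ∃ i, Sbtw k (f (i - 1)) (f i) (f (i + 1)) := by
  obtain ⟨g, hg, hrange⟩ := exists_injective_affineMap_of_collinear hcol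
    ⟨f 0, Set.mem_range_self _, f (0 + 1), Set.mem_range_self _, hne 0⟩
  choose r hr using fun i ↦ hrange (Set.mem_range_self i)
  simp only [← hr] at hne ⊢
  simp only [hg.sbtw_map_iff]
  obtain ⟨i, ⟨h₁, h₂⟩ | ⟨h₁, h₂⟩⟩ :=
    exists_lt_and_lt_or_gt_and_gt_of_odd hodd fun i ↦ ne_of_apply_ne g (hne i)
  · exact ⟨i, sbtw_of_lt_of_lt h₁ h₂⟩
  · exact ⟨i, (sbtw_of_lt_of_lt h₁ h₂).symm⟩

theorem collinear_odd_tour_has_straight_angle_general {V P : Type*} [NormedAddCommGroup V]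
    [InnerProductSpace ℝ V] [MetricSpace P] [NormedAddTorsor V P] {n : ℕ} (hodd : Odd n)
    {f : ZMod n → P} (hcol : Collinear ℝ (Set.range f)) (hne : ∀ i, f i ≠ f (i + 1)) :
    ∃ i, ∠ (f (i - 1)) (f i) (f (i + 1)) = π :=
  (exists_sbtw_of_collinear_range_of_odd hodd hcol hne).imp fun _ h ↦ h.angle₁₂₃_eq_pi

/-- For an odd number `n ≥ 3` of collinear points, every spanning tour has a rotation
angle equal to `π` at some vertex. -/
theorem collinear_odd_tour_has_straight_angle
    (n : ℕ) (hn : 3 ≤ n) (hodd : Odd n)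
    (S : Finset (EuclideanSpace ℝ (Fin 2))) (hcard : S.card = n)
    (hcol : Collinear ℝ (↑S : Set (EuclideanSpace ℝ (Fin 2))))
    (f : ZMod n → EuclideanSpace ℝ (Fin 2))
    (hinj : Function.Injective f) (hrange : Set.range f = ↑S) :
    ∃ i : ZMod n, EuclideanGeometry.angle (f (i - 1)) (f i) (f (i + 1)) = π := by
  have : Fact (1 < n) := ⟨by lia⟩
  exact collinear_odd_tour_has_straight_angle_general hodd (hrange ▸ hcol) fun i ↦
    hinj.ne (by simp)
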